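/- Let A be an invertible d×d real matrix admitting a proximal decomposition A = L₁·p₁ + … + L_d·p_d, and let B be any invertible d×d real matrix. Then the sequence λ₁(Aⁿ·B)/λ₁(Aⁿ) converges to |tr(p₁·B)| as n → ∞. -/

import Mathlib

open scoped BigOperators

/-- The spectral radius of a real `d × d` matrix: the maximum of the absolute values of
its complex eigenvalues, i.e. `λ₁(C)`. -/
noncomputable def specRad {d : ℕ} (C : Matrix (Fin d) (Fin d) ℝ) : ℝ :=
  (spectralRadius ℂ (C.map (Complex.ofReal))).toReal

/-- `λ_d(C) = λ₁(C⁻¹)⁻¹`, the smallest absolute value of a complex eigenvalue of an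
invertible matrix `C`. -/
noncomputable def lamLast {d : ℕ} (C : Matrix (Fin d) (Fin d) ℝ) : ℝ :=
  (specRad C⁻¹)⁻¹

/-- A proximal decomposition `A = L₁ p₁ + ⋯ + L_d p_d` of a `d × d` real matrix:
`|L₁| > |L₂| > ⋯ > |L_d| > 0` and the `pᵢ` are rank-one projections with
`pᵢ pⱼ = 0` for `i ≠ j`, `pᵢ² = pᵢ` and `p₁ + ⋯ + p_d = 1`. -/
structure ProximalDecomp {d : ℕ} (A : Matrix (Fin d) (Fin d) ℝ) where
  L : Fin d → ℝ
  p : Fin d → Matrix (Fin d) (Fin d) ℝ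
  strictAnti : StrictAnti fun i => |L i|
  abs_pos : ∀ i, 0 < |L i|
  rank_one : ∀ i, (p i).rank = 1
  mul_eq_zero : ∀ i j, i ≠ j → p i * p j = 0
  idem : ∀ i, p i * p i = p i
  sum_eq_one : ∑ i, p i = 1
  decomp : A = ∑ i, L i • p i

/-!
Divide `Aⁿ` and `Aⁿ B` by `L₁ⁿ`: since `|Lᵢ / L₁| < 1` for `i ≠ 1`, they converge to `p₁` and
`p₁ B`. Both limits have rank at most one, and the spectral radius of such a matrix is the absolute
value of its trace; moreover `tr p₁ = rank p₁ = 1`. What remains is that the spectral radius of a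
matrix is continuous. Upper semicontinuity holds in every Banach algebra. For lower semicontinuity,
let `t` be an eigenvalue of `M`: if all eigenvalues of `N` were at distance at least `ε` from `t`,
then `|χ_N(t)| = ∏ |t - z|` would be at least `ε ^ card n`, where `n` is the index type, whereas
`χ_N(t) → χ_M(t) = 0` as `N → M`.
-/

open Filter Topology Polynomial Matrix
open scoped ENNReal NNReal

section SpectralRadius

variable {𝕜 A : Type*} [NormedField 𝕜]

theorem spectralRadius_smul [Ring A] [Algebra 𝕜 A] (c : 𝕜) (a : A) :
    spectralRadius 𝕜 (c • a) = ‖c‖ₑ * spectralRadius 𝕜 a := by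
  obtain rfl | hc := eq_or_ne c 0
  · simp
  have hspec : spectrum 𝕜 (c • a) = (c • ·) '' spectrum 𝕜 a :=
    spectrum.unit_smul_eq_smul a (Units.mk0 c hc)
  simp only [spectralRadius, hspec, iSup_image, ← enorm_eq_nnnorm, smul_eq_mul, enorm_mul,
    ENNReal.mul_iSup]

variable [NormedRing A] [NormedAlgebra 𝕜 A] [CompleteSpace A]

theorem spectralRadius_ne_top (a : A) : spectralRadius 𝕜 a ≠ ∞ := by
  refine ne_top_of_le_ne_top (ENNReal.coe_ne_top (r := ‖a‖₊ * ‖(1 : A)‖₊)) (iSup₂_le fun z hz ↦ ?_)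
  exact mod_cast mem_closedBall_zero_iff.mp (spectrum.subset_closedBall_norm_mul a hz)

theorem upperSemicontinuous_spectralRadius [ProperSpace 𝕜] :
    UpperSemicontinuous (spectralRadius 𝕜 : A → ℝ≥0∞) := by
  intro a y hy
  obtain ⟨r, har, hry⟩ := ENNReal.lt_iff_exists_nnreal_btwn.mp hy
  have hball : Metric.ball (0 : 𝕜) r ∈ 𝓝ˢ (spectrum 𝕜 a) :=
    Metric.isOpen_ball.mem_nhdsSet.mpr fun z hz ↦ mem_ball_zero_iff.mpr <|
      mod_cast (le_iSup₂ (f := fun k (_ : k ∈ spectrum 𝕜 a) ↦ (‖k‖₊ : ℝ≥0∞)) z hz).trans_lt har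
  filter_upwards [upperHemicontinuous_spectrum 𝕜 A a _ hball] with b hb
  refine lt_of_le_of_lt (iSup₂_le fun z hz ↦ ?_) hry
  exact mod_cast (mem_ball_zero_iff.mp (subset_of_mem_nhdsSet hb hz)).le

end SpectralRadius

section CharpolyContinuity

variable {n 𝕜 : Type*} [Fintype n] [DecidableEq n]

theorem continuous_eval_charpoly {R : Type*} [CommRing R] [TopologicalSpace R]
    [IsTopologicalRing R] (t : R) : Continuous fun M : Matrix n n R ↦ M.charpoly.eval t := by
  simp only [eval_charpoly]
  fun_prop

variable [NormedField 𝕜] [IsAlgClosed 𝕜]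

theorem pow_card_le_norm_eval_charpoly (M : Matrix n n 𝕜) (t : 𝕜) {ε : ℝ} (hε : 0 ≤ ε)
    (h : ∀ z ∈ spectrum 𝕜 M, ε ≤ ‖t - z‖) :
    ε ^ Fintype.card n ≤ ‖M.charpoly.eval t‖ := by
  have hs : M.charpoly.Splits := IsAlgClosed.splits _
  calc ε ^ Fintype.card n = (M.charpoly.roots.map fun _ ↦ ε).prod := by
        simp [splits_iff_card_roots.mp hs]
    _ ≤ (M.charpoly.roots.map fun z ↦ ‖t - z‖).prod :=
        Multiset.prod_map_le_prod_map₀ _ _ (fun _ _ ↦ hε) fun z hz ↦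
          h z (mem_spectrum_of_isRoot_charpoly (isRoot_of_mem_roots hz))
    _ = ‖M.charpoly.eval t‖ := by
        rw [hs.eval_eq_prod_roots_of_monic M.charpoly_monic, ← normHom_apply, map_multiset_prod,
          Multiset.map_map]
        rfl

theorem lowerHemicontinuous_spectrum_matrix :
    LowerHemicontinuous (spectrum 𝕜 : Matrix n n 𝕜 → Set 𝕜) := by
  refine fun M ↦ lowerHemicontinuousAt_iff.mpr fun U hU ⟨t, htM, htU⟩ ↦ ?_
  obtain ⟨ε, hε, hεU⟩ := Metric.isOpen_iff.mp hU t htU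
  have hroot : ‖M.charpoly.eval t‖ = 0 :=
    norm_eq_zero.mpr (mem_spectrum_iff_isRoot_charpoly.mp htM)
  filter_upwards [(continuous_eval_charpoly t).norm.continuousAt.eventually_lt_const
    (hroot.trans_lt (pow_pos hε (Fintype.card n)))] with N hN
  by_contra hempty
  refine hN.not_ge (pow_card_le_norm_eval_charpoly N t hε.le fun z hz ↦ ?_)
  by_contra! hlt
  exact hempty ⟨z, hz, hεU (mem_ball_iff_norm'.mpr hlt)⟩

theorem lowerSemicontinuous_spectralRadius_matrix :
    LowerSemicontinuous (spectralRadius 𝕜 : Matrix n n 𝕜 → ℝ≥0∞) := by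
  intro M y hy
  obtain ⟨z, hz, hyz⟩ : ∃ z ∈ spectrum 𝕜 M, y < ‖z‖ₑ := by
    simpa only [spectralRadius, lt_iSup_iff, exists_prop, enorm_eq_nnnorm] using hy
  have hopen : IsOpen {w : 𝕜 | y < ‖w‖ₑ} := isOpen_lt continuous_const continuous_enorm
  filter_upwards [lowerHemicontinuousAt_iff.mp (lowerHemicontinuous_spectrum_matrix M) _ hopen
    ⟨z, hz, hyz⟩] with N ⟨w, hw, hyw⟩
  exact hyw.trans_le (le_iSup₂_of_le w hw le_rfl)

open scoped Matrix.Norms.Operator in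
theorem continuous_spectralRadius_matrix :
    Continuous (spectralRadius ℂ : Matrix n n ℂ → ℝ≥0∞) :=
  continuous_iff_lower_upperSemicontinuous.mpr
    ⟨lowerSemicontinuous_spectralRadius_matrix, upperSemicontinuous_spectralRadius⟩

end CharpolyContinuity

section RankOne

variable {m n K : Type*} [Fintype n]

theorem exists_eq_vecMulVec_of_rank_le_one [Field K] {M : Matrix m n K}
    (h : M.rank ≤ 1) : ∃ (u : m → K) (v : n → K), M = vecMulVec u v := by
  classical
  obtain ⟨u, hu⟩ := finrank_le_one_iff.mp h
  choose v hv using fun j ↦ hu ⟨M.mulVecLin (Pi.single j 1), LinearMap.mem_range_self _ _⟩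
  refine ⟨u, v, ?_⟩
  ext i j
  simpa [vecMulVec_apply, mul_comm] using (congrFun (congrArg Subtype.val (hv j)) i).symm

theorem trace_eq_rank_of_isIdempotentElem [Field K] {P : Matrix n n K}
    (hP : IsIdempotentElem P) : P.trace = P.rank := by
  classical
  have hproj : IsIdempotentElem (toLin' P) := hP.map toLinAlgEquiv'
  rw [← trace_toLin'_eq, (LinearMap.IsIdempotentElem.isProj_range _ hproj).trace]
  rfl

theorem spectralRadius_vecMulVec [DecidableEq n] [NormedField K] (u v : n → K) :
    spectralRadius K (vecMulVec u v) = ‖u ⬝ᵥ v‖ₑ := by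
  cases isEmpty_or_nonempty n
  · simp
  have hmem (z : K) : z ∈ spectrum K (vecMulVec u v) ↔
      z ^ (Fintype.card n - 1) * (z - u ⬝ᵥ v) = 0 := by
    rw [mem_spectrum_iff_isRoot_charpoly, charpoly_vecMulVec, IsRoot.def, mul_sub,
      ← pow_succ, Nat.sub_add_cancel Fintype.card_pos]
    simp [mul_comm]
  apply le_antisymm
  · refine iSup₂_le fun z hz ↦ ?_
    rcases mul_eq_zero.mp ((hmem z).mp hz) with h0 | h0
    · simp [eq_zero_of_pow_eq_zero h0]
    · rw [sub_eq_zero.mp h0, enorm_eq_nnnorm]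
  · exact le_iSup₂_of_le (u ⬝ᵥ v) ((hmem _).mpr (by simp)) le_rfl

end RankOne

section SpecRad

variable {d : ℕ}

open scoped Matrix.Norms.Operator in
theorem continuous_specRad : Continuous (specRad (d := d)) :=
  ENNReal.continuousOn_toReal.comp_continuous
    (continuous_spectralRadius_matrix.comp (continuous_id.matrix_map Complex.continuous_ofReal))
    fun _ ↦ spectralRadius_ne_top _

theorem specRad_smul (c : ℝ) (C : Matrix (Fin d) (Fin d) ℝ) :
    specRad (c • C) = |c| * specRad C := by
  have hmap : (c • C).map Complex.ofReal = (c : ℂ) • C.map Complex.ofReal := by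
    ext i j
    simp
  rw [specRad, hmap, spectralRadius_smul, ENNReal.toReal_mul, toReal_enorm, Complex.norm_real,
    Real.norm_eq_abs, specRad]

theorem specRad_eq_abs_trace_of_rank_le_one {C : Matrix (Fin d) (Fin d) ℝ} (hC : C.rank ≤ 1) :
    specRad C = |C.trace| := by
  obtain ⟨u, v, rfl⟩ := exists_eq_vecMulVec_of_rank_le_one hC
  have hmap : (vecMulVec u v).map Complex.ofReal =
      vecMulVec (Complex.ofReal ∘ u) (Complex.ofReal ∘ v) := by
    ext i j
    simp [vecMulVec_apply]
  have hdot : (Complex.ofReal ∘ u) ⬝ᵥ (Complex.ofReal ∘ v) = (u ⬝ᵥ v : ℝ) :=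
    (Complex.ofRealHom.map_dotProduct u v).symm
  simp [specRad, hmap, spectralRadius_vecMulVec, hdot, trace_vecMulVec]

theorem tendsto_specRad_mul_div_specRad {ι : Type*} {l : Filter ι} {c : ι → ℝ}
    {M : ι → Matrix (Fin d) (Fin d) ℝ} {P : Matrix (Fin d) (Fin d) ℝ} (hc : ∀ i, c i ≠ 0)
    (hM : Tendsto (fun i ↦ c i • M i) l (𝓝 P)) (hrank : P.rank ≤ 1) (htr : P.trace ≠ 0)
    (B : Matrix (Fin d) (Fin d) ℝ) :
    Tendsto (fun i ↦ specRad (M i * B) / specRad (M i)) l (𝓝 (|(P * B).trace| / |P.trace|)) := by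
  have hnum : Tendsto (fun i ↦ specRad (c i • M i * B)) l (𝓝 |(P * B).trace|) := by
    rw [← specRad_eq_abs_trace_of_rank_le_one ((rank_mul_le_left P B).trans hrank)]
    exact (continuous_specRad.tendsto _).comp (hM.mul_const B)
  have hden : Tendsto (fun i ↦ specRad (c i • M i)) l (𝓝 |P.trace|) := by
    rw [← specRad_eq_abs_trace_of_rank_le_one hrank]
    exact (continuous_specRad.tendsto _).comp hM
  refine (hnum.div hden (abs_ne_zero.mpr htr)).congr fun i ↦ ?_
  simp only [Pi.div_apply, smul_mul_assoc, specRad_smul]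
  exact mul_div_mul_left _ _ (abs_ne_zero.mpr (hc i))

end SpecRad

section SpectralDecomposition

variable {ι : Type*} [Fintype ι]

theorem sum_smul_pow_of_completeOrthogonalIdempotents {R A : Type*} [CommSemiring R] [Semiring A]
    [Algebra R A] {e : ι → A} (he : CompleteOrthogonalIdempotents e) (a : ι → R) (k : ℕ) :
    (∑ i, a i • e i) ^ k = ∑ i, a i ^ k • e i := by
  classical
  induction k with
  | zero => simp [he.complete]
  | succ k ih =>
    simp [pow_succ, ih, Finset.sum_mul_sum, he.mul_eq, smul_smul, mul_comm]

theorem tendsto_inv_pow_smul_sum_pow_smul {𝕜 E : Type*} [NormedField 𝕜] [AddCommMonoid E]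
    [TopologicalSpace E] [ContinuousAdd E] [Module 𝕜 E] [ContinuousSMul 𝕜 E] {a : ι → 𝕜}
    {i₀ : ι} (ha₀ : a i₀ ≠ 0) (ha : ∀ i ≠ i₀, ‖a i‖ < ‖a i₀‖) (e : ι → E) :
    Tendsto (fun k : ℕ ↦ (a i₀ ^ k)⁻¹ • ∑ i, a i ^ k • e i) atTop (𝓝 (e i₀)) := by
  classical
  have hterm (i : ι) : Tendsto (fun k : ℕ ↦ (a i / a i₀) ^ k • e i) atTop
      (𝓝 (if i = i₀ then e i else 0)) := by
    split_ifs with hi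
    · simpa [hi, ha₀] using tendsto_const_nhds
    · rw [← zero_smul 𝕜 (e i)]
      refine (tendsto_pow_atTop_nhds_zero_of_norm_lt_one ?_).smul_const _
      rw [norm_div, div_lt_one (norm_pos_iff.mpr ha₀)]
      exact ha i hi
  have hsum := tendsto_finsetSum Finset.univ fun i _ ↦ hterm i
  rw [Finset.sum_ite_eq' Finset.univ, if_pos (Finset.mem_univ _)] at hsum
  simpa only [Finset.smul_sum, smul_smul, div_pow, inv_mul_eq_div] using hsum

end SpectralDecomposition

namespace ProximalDecomp

variable {d : ℕ} {A : Matrix (Fin d) (Fin d) ℝ} (DA : ProximalDecomp A)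

theorem completeOrthogonalIdempotents : CompleteOrthogonalIdempotents DA.p where
  idem := DA.idem
  ortho := DA.mul_eq_zero
  complete := DA.sum_eq_one

theorem pow_eq_sum (k : ℕ) : A ^ k = ∑ i, DA.L i ^ k • DA.p i := by
  conv_lhs => rw [DA.decomp]
  exact sum_smul_pow_of_completeOrthogonalIdempotents DA.completeOrthogonalIdempotents DA.L k

theorem L_ne_zero (i : Fin d) : DA.L i ≠ 0 :=
  _root_.abs_pos.mp (DA.abs_pos i)

theorem tendsto_inv_pow_smul_pow (hd : 0 < d) :
    Tendsto (fun k : ℕ ↦ (DA.L ⟨0, hd⟩ ^ k)⁻¹ • A ^ k) atTop (𝓝 (DA.p ⟨0, hd⟩)) := by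
  simp only [DA.pow_eq_sum]
  refine tendsto_inv_pow_smul_sum_pow_smul (DA.L_ne_zero _) (fun i hi ↦ ?_) DA.p
  exact DA.strictAnti (lt_of_le_of_ne (Nat.zero_le _) hi.symm)

theorem trace_p (i : Fin d) : (DA.p i).trace = 1 := by
  rw [trace_eq_rank_of_isIdempotentElem (DA.idem i), DA.rank_one, Nat.cast_one]

end ProximalDecomp

theorem specRad_mul_tendsto_general (d : ℕ) (hd : 0 < d) (A B : Matrix (Fin d) (Fin d) ℝ)
    (DA : ProximalDecomp A) :
    Tendsto (fun n : ℕ ↦ specRad (A ^ n * B) / specRad (A ^ n)) atTop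
      (𝓝 |(DA.p ⟨0, hd⟩ * B).trace|) := by
  have htr : (DA.p ⟨0, hd⟩).trace = 1 := DA.trace_p _
  simpa [htr] using tendsto_specRad_mul_div_specRad
    (fun n ↦ inv_ne_zero (pow_ne_zero n (DA.L_ne_zero _))) (DA.tendsto_inv_pow_smul_pow hd)
    (DA.rank_one _).le (htr ▸ one_ne_zero) B

open Filter in
/-- If `A` is an invertible `d × d` real matrix with a proximal decomposition and `B` is
any invertible `d × d` real matrix, then `λ₁(Aⁿ B) / λ₁(Aⁿ) → |tr (p₁ B)|` as `n → ∞`. -/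
theorem specRad_mul_tendsto (d : ℕ) (hd : 0 < d)
    (A B : Matrix (Fin d) (Fin d) ℝ) (hA : IsUnit A) (hB : IsUnit B)
    (DA : ProximalDecomp A) :
    Tendsto (fun n : ℕ => specRad (A ^ n * B) / specRad (A ^ n)) atTop
      (nhds |(DA.p ⟨0, hd⟩ * B).trace|) := by
  exact specRad_mul_tendsto_general d hd A B DA
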